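/- arXiv:1209.5137 — 4 statements merged into one kernel-verified Lean document; each statement's English description precedes it below -/
import Mathlib

section
/- For every $k \geq 1$, the group $GL_4(\mathbb{F}_2)$ (which equals $PGL_4(\mathbb{F}_2) = PSL_4(\mathbb{F}_2)$) is $[k]$-solvable if and only if $k \geq 8$. -/
/-!
The proof identifies `GL₄(𝔽₂)` with the alternating group `A₈` and then uses that `A₈` is simple.

`GL₄(𝔽₂)` acts on the `6`-dimensional space of alternating `4 × 4` matrices over `𝔽₂` by
`A ↦ g A gᵀ`. There are `28 = C(8, 2)` nondegenerate alternating matrices, and they can be labelled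
by the pairs of an `8`-element set in such a way that the action comes from permutations of that
set. Concretely, `pt 0, …, pt 7` are alternating matrices with `pt 0 = 0` for which the sums
`pt i + pt j`, `i ≠ j`, are pairwise distinct for distinct pairs (these sums are the `28`
nondegenerate matrices), and for every `g` there is a unique permutation `σ` with
`g (pt i + pt j) gᵀ = pt (σ i) + pt (σ j)` (`Induces`). Existence of `σ` need only be checked on
transvections, which generate (`exists_induces`); uniqueness (`Induces.unique`) makes `g ↦ σ` a
homomorphism `toPerm` to `S₈`. If `σ = 1`, then `g` fixes every alternating matrix, because the
`pt i` span them, and this forces `g = 1` (`eq_one_of_fixes`). As `|GL₄(𝔽₂)| = 20160 = 8! / 2`, the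
image has index `2`, so it is `A₈`.

Hence `GL₄(𝔽₂)` embeds into `S_k` for `k ≥ 8`. Conversely, a chain witnessing `[k]`-solvability of a
simple group `G` has a step from `⊥` to `G`, so `G` is abelian or embeds into `S_k`
(`IsKSolvable.of_isSimpleGroup`); for `k ≤ 7` both are impossible for `GL₄(𝔽₂)`, the second because
`20160 > 7!`.
-/

/-- A group `G` is `[k]`-solvable if there is a chain of subgroups
`1 = G₀ ◁ G₁ ◁ ⋯ ◁ Gₙ = G`, each normal in the next, such that every quotient
`Gᵢ/Gᵢ₋₁` is either abelian or embeds into the symmetric group on `k` letters. -/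
def IsKSolvable (k : ℕ) (G : Type*) [Group G] : Prop :=
  ∃ (n : ℕ) (c : Fin (n + 1) → Subgroup G),
    c 0 = ⊥ ∧ c (Fin.last n) = ⊤ ∧
    ∀ i : Fin n,
      ∃ (_ : c i.castSucc ≤ c i.succ)
        (hN : ((c i.castSucc).subgroupOf (c i.succ)).Normal),
        letI := hN
        ((∀ a b : (c i.succ) ⧸ (c i.castSucc).subgroupOf (c i.succ), a * b = b * a) ∨
          ∃ f : ((c i.succ) ⧸ (c i.castSucc).subgroupOf (c i.succ)) →* Equiv.Perm (Fin k),
            Function.Injective f)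

namespace GL42

open Matrix

/-- Eight alternating matrices over `𝔽₂`, the first being `0`, such that the sums of two distinct
ones are the `28` nondegenerate alternating matrices. -/
def pt : Fin 8 → Matrix (Fin 4) (Fin 4) (ZMod 2) :=
  ![!![0, 0, 0, 0; 0, 0, 0, 0; 0, 0, 0, 0; 0, 0, 0, 0],
    !![0, 0, 0, 1; 0, 0, 1, 0; 0, 1, 0, 0; 1, 0, 0, 0],
    !![0, 0, 1, 1; 0, 0, 0, 1; 1, 0, 0, 0; 1, 1, 0, 0],
    !![0, 1, 1, 0; 1, 0, 1, 1; 1, 1, 0, 0; 0, 1, 0, 0],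
    !![0, 1, 1, 1; 1, 0, 0, 0; 1, 0, 0, 1; 1, 0, 1, 0],
    !![0, 1, 0, 0; 1, 0, 1, 0; 0, 1, 0, 1; 0, 0, 1, 0],
    !![0, 1, 0, 1; 1, 0, 0, 1; 0, 0, 0, 1; 1, 1, 1, 0],
    !![0, 0, 1, 0; 0, 0, 1, 1; 1, 1, 0, 1; 0, 1, 1, 0]]

/-- The permutation `σ` induces the action of the matrix `g` on the sums of pairs of the `pt i`. -/
def Induces (g : Matrix (Fin 4) (Fin 4) (ZMod 2)) (σ : Equiv.Perm (Fin 8)) : Prop :=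
  ∀ i j, g * (pt i + pt j) * gᵀ = pt (σ i) + pt (σ j)

lemma pt_zero : pt 0 = 0 := by decide

lemma add_self_eq_zero (A : Matrix (Fin 4) (Fin 4) (ZMod 2)) : A + A = 0 := by
  ext i j
  exact CharTwo.add_self_eq_zero _

/-- By linearity it suffices to treat the pairs `{i, 0}`. -/
lemma induces_of_zero {g : Matrix (Fin 4) (Fin 4) (ZMod 2)} {σ : Equiv.Perm (Fin 8)}
    (h : ∀ i, g * pt i * gᵀ = pt (σ i) + pt (σ 0)) : Induces g σ := by
  intro i j
  rw [mul_add, add_mul, h, h, add_add_add_comm, add_self_eq_zero, add_zero]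

set_option maxRecDepth 100000 in
lemma pair_eq : ∀ i j k l : Fin 8, pt i + pt j = pt k + pt l →
    i = j ∨ (i = k ∧ j = l) ∨ (i = l ∧ j = k) := by
  decide +kernel

lemma Induces.unique {g : Matrix (Fin 4) (Fin 4) (ZMod 2)} {σ τ : Equiv.Perm (Fin 8)}
    (hσ : Induces g σ) (hτ : Induces g τ) : σ = τ := by
  have key : ∀ i j, i ≠ j → σ i ≠ τ i → σ i = τ j := by
    intro i j hij hi
    rcases pair_eq _ _ _ _ ((hσ i j).symm.trans (hτ i j)) with h | h | h
    · exact absurd (σ.injective h) hij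
    · exact absurd h.1 hi
    · exact h.1
  ext1 i
  by_contra hi
  obtain ⟨j, l, hj, hl, hjl⟩ : ∃ j l : Fin 8, i ≠ j ∧ i ≠ l ∧ j ≠ l := by
    clear hi
    revert i
    decide
  exact hjl (τ.injective ((key i j hj hi).symm.trans (key i l hl hi)))

lemma Induces.mul {g h : Matrix (Fin 4) (Fin 4) (ZMod 2)} {σ τ : Equiv.Perm (Fin 8)}
    (hσ : Induces g σ) (hτ : Induces h τ) : Induces (g * h) (σ * τ) := by
  intro i j
  rw [Equiv.Perm.mul_apply, Equiv.Perm.mul_apply, ← hσ, ← hτ, transpose_mul]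
  simp only [mul_assoc]

lemma induces_one : Induces 1 1 := by
  intro i j
  simp

/-- The permutation induced by the transvection `1 + E_ij`. The diagonal entries are irrelevant and
are set to the identity. -/
def transvectionTable : Fin 4 → Fin 4 → Fin 8 → Fin 8 :=
  ![![id, ![4, 5, 6, 7, 0, 1, 2, 3], ![2, 3, 0, 1, 6, 7, 4, 5], ![1, 0, 3, 2, 5, 4, 7, 6]],
    ![![5, 6, 4, 7, 2, 0, 1, 3], id, ![1, 0, 3, 2, 7, 6, 5, 4], ![3, 2, 1, 0, 6, 7, 4, 5]],
    ![![7, 2, 1, 5, 6, 3, 4, 0], ![1, 0, 7, 6, 5, 4, 3, 2], id, ![5, 4, 6, 7, 1, 0, 2, 3]],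
    ![![1, 0, 7, 4, 3, 6, 5, 2], ![2, 7, 0, 5, 6, 3, 4, 1], ![6, 5, 4, 7, 2, 1, 0, 3], id]]

lemma transvectionTable_involutive :
    ∀ i j x, transvectionTable i j (transvectionTable i j x) = x := by
  decide +kernel

set_option maxRecDepth 100000 in
lemma transvection_pt : ∀ i j, i ≠ j → ∀ x,
    transvection i j (1 : ZMod 2) * pt x * (transvection i j (1 : ZMod 2))ᵀ
      = pt (transvectionTable i j x) + pt (transvectionTable i j 0) := by
  decide +kernel

lemma zmod_two_cases : ∀ c : ZMod 2, c = 0 ∨ c = 1 := by decide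

lemma exists_induces (g : Matrix (Fin 4) (Fin 4) (ZMod 2)) (hg : g.det ≠ 0) :
    ∃ σ, Induces g σ := by
  refine diagonal_transvection_induction_of_det_ne_zero (fun g => ∃ σ, Induces g σ) g hg ?_ ?_ ?_
  · intro D hD
    -- An invertible diagonal matrix over `𝔽₂` is the identity.
    have : D = 1 := by
      funext i
      rw [det_diagonal, Finset.prod_ne_zero_iff] at hD
      exact (zmod_two_cases (D i)).resolve_left (hD i (Finset.mem_univ i))
    exact ⟨1, by rw [this, diagonal_one']; exact induces_one⟩
  · rintro ⟨i, j, hij, c⟩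
    rw [TransvectionStruct.toMatrix_mk]
    rcases zmod_two_cases c with rfl | rfl
    · exact ⟨1, by rw [transvection_zero]; exact induces_one⟩
    · exact ⟨Function.Involutive.toPerm _ (transvectionTable_involutive i j),
        induces_of_zero (transvection_pt i j hij)⟩
  · rintro A B - - ⟨σ, hσ⟩ ⟨τ, hτ⟩
    exact ⟨σ * τ, hσ.mul hτ⟩

lemma exists_induces_GL (g : GL (Fin 4) (ZMod 2)) :
    ∃ σ, Induces (g : Matrix (Fin 4) (Fin 4) (ZMod 2)) σ :=
  exists_induces _ (GeneralLinearGroup.det_ne_zero g)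

/-- The permutation representation of `GL₄(𝔽₂)` of degree `8`. -/
noncomputable def toPerm : GL (Fin 4) (ZMod 2) →* Equiv.Perm (Fin 8) :=
  MonoidHom.mk' (fun g => (exists_induces_GL g).choose) fun g h =>
    (exists_induces_GL (g * h)).choose_spec.unique
      ((exists_induces_GL g).choose_spec.mul (exists_induces_GL h).choose_spec)

lemma induces_toPerm (g : GL (Fin 4) (ZMod 2)) :
    Induces (g : Matrix (Fin 4) (Fin 4) (ZMod 2)) (toPerm g) :=
  (exists_induces_GL g).choose_spec

/-- The elementary alternating matrices are sums of the `pt i`, so these span all alternating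
matrices. -/
lemma exists_sum_pt : ∀ a b : Fin 4, a ≠ b → ∃ x y z : Fin 8,
    single a b (1 : ZMod 2) + single b a 1 = pt x + pt y + pt z := by
  decide +kernel

/-- A matrix fixing all elementary alternating matrices has `2 × 2` minors equal to those of the
identity, so each of its columns is proportional to the corresponding basis vector. -/
lemma eq_one_of_fixes (g : Matrix (Fin 4) (Fin 4) (ZMod 2))
    (h : ∀ a b, a ≠ b → g * (single a b 1 + single b a 1) * gᵀ = single a b 1 + single b a 1) :
    g = 1 := by
  have minor : ∀ a b, a ≠ b → ∀ c d, g c a * g d b + g c b * g d a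
      = (single a b 1 + single b a 1 : Matrix (Fin 4) (Fin 4) (ZMod 2)) c d := by
    intro a b hab c d
    rw [← h a b hab]
    simp [mul_add, add_mul, mul_apply, single_apply, ite_and, Finset.sum_add_distrib]
  have diag : ∀ a b, a ≠ b → g a a * g b b + g a b * g b a = 1 := by
    intro a b hab
    rw [minor a b hab]
    simp [hab, hab.symm]
  have off : ∀ c a, c ≠ a → g c a = 0 := by
    intro c a hca
    obtain ⟨b, hab, hcb⟩ : ∃ b : Fin 4, a ≠ b ∧ c ≠ b := by
      clear hca
      revert c a
      decide
    have h1 := diag a b hab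
    have h2 : g c a * g a b + g c b * g a a = 0 := by
      rw [minor a b hab]
      simp [hca.symm, hcb.symm]
    have h3 : g c a * g b b + g c b * g b a = 0 := by
      rw [minor a b hab]
      simp [hca.symm, hcb.symm]
    have two : (2 : ZMod 2) = 0 := by decide
    linear_combination -g c a * h1 + g a a * h3 + g b a * h2 - g a a * g c b * g b a * two
  ext c a
  by_cases hca : c = a
  · subst hca
    obtain ⟨b, hcb⟩ : ∃ b : Fin 4, c ≠ b := by
      revert c
      decide
    have h1 := diag c b hcb
    rw [off c b hcb, zero_mul, add_zero] at h1
    rw [one_apply_eq]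
    exact (zmod_two_cases _).resolve_left (left_ne_zero_of_mul (h1 ▸ one_ne_zero))
  · rw [off c a hca, one_apply_ne hca]

lemma toPerm_injective : Function.Injective toPerm := by
  rw [injective_iff_map_eq_one]
  intro g hg
  have hi := induces_toPerm g
  have fix : ∀ i, (g : Matrix (Fin 4) (Fin 4) (ZMod 2)) * pt i
      * (g : Matrix (Fin 4) (Fin 4) (ZMod 2))ᵀ = pt i := by
    intro i
    simpa [hg, pt_zero] using hi i 0
  refine Units.ext (eq_one_of_fixes _ ?_)
  intro a b hab
  obtain ⟨x, y, z, hxyz⟩ := exists_sum_pt a b hab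
  rw [hxyz, mul_add, mul_add, add_mul, add_mul, fix, fix, fix]

lemma natCard_GL : Nat.card (GL (Fin 4) (ZMod 2)) = 20160 := by
  rw [card_GL_field]
  simp [Fin.prod_univ_succ]

lemma range_toPerm : toPerm.range = alternatingGroup (Fin 8) := by
  apply Equiv.Perm.eq_alternatingGroup_of_index_eq_two
  have h := toPerm.range.index_mul_card
  rw [← Nat.card_congr (MonoidHom.ofInjective toPerm_injective).toEquiv, natCard_GL,
    Nat.card_perm, Nat.card_eq_fintype_card, Fintype.card_fin] at h
  have h8 : Nat.factorial 8 = 2 * 20160 := by decide +kernel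
  exact Nat.eq_of_mul_eq_mul_right (by norm_num) (h.trans h8)

instance isSimpleGroup_GL : IsSimpleGroup (GL (Fin 4) (ZMod 2)) := by
  have : IsSimpleGroup (alternatingGroup (Fin 8)) := alternatingGroup.isSimpleGroup (by simp)
  have e : GL (Fin 4) (ZMod 2) ≃* alternatingGroup (Fin 8) :=
    (MonoidHom.ofInjective toPerm_injective).trans (MulEquiv.subgroupCongr range_toPerm)
  exact e.isSimpleGroup

lemma not_commutative : ¬ ∀ a b : GL (Fin 4) (ZMod 2), a * b = b * a := by
  intro h
  have hdet : ∀ i j : Fin 4, i ≠ j → (transvection i j (1 : ZMod 2)).det ≠ 0 := fun i j hij => by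
    rw [det_transvection_of_ne i j hij]
    exact one_ne_zero
  have h1 := congrArg Units.val (h (.mkOfDetNeZero _ (hdet 0 1 (by decide)))
    (.mkOfDetNeZero _ (hdet 1 0 (by decide))))
  change transvection 0 1 (1 : ZMod 2) * transvection 1 0 1
    = transvection 1 0 1 * transvection 0 1 1 at h1
  revert h1
  decide +kernel

end GL42

/-- A series from `⊥` to `G` has a term that is proper while the next one is `G`. That term is
normal in the simple group `G`, hence trivial, so the factor above it is `G` itself. -/
lemma IsKSolvable.of_isSimpleGroup {k : ℕ} {G : Type*} [Group G] [IsSimpleGroup G]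
    (h : IsKSolvable k G) :
    (∀ a b : G, a * b = b * a) ∨ ∃ f : G →* Equiv.Perm (Fin k), Function.Injective f := by
  obtain ⟨n, c, h0, hn, hc⟩ := h
  obtain ⟨i, hi, hi'⟩ : ∃ i : Fin n, c i.castSucc ≠ ⊤ ∧ c i.succ = ⊤ := by
    by_contra! hcon
    have : ∀ i, c i ≠ ⊤ := by
      intro i
      induction i using Fin.induction with
      | zero => rw [h0]; exact bot_ne_top
      | succ i ih => exact hcon i ih
    exact this _ hn
  obtain ⟨-, hN, hq⟩ := hc i
  generalize c i.castSucc = H at *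
  generalize c i.succ = K at *
  subst hi'
  have hH : H.Normal := by
    refine ⟨fun x hx g => ?_⟩
    exact hN.conj_mem ⟨x, trivial⟩ hx ⟨g, trivial⟩
  obtain rfl : H = ⊥ := hH.eq_bot_or_eq_top.resolve_right hi
  let q : G →* (⊤ : Subgroup G) ⧸ (⊥ : Subgroup G).subgroupOf ⊤ :=
    (QuotientGroup.mk' _).comp Subgroup.topEquiv.symm.toMonoidHom
  have hinj : Function.Injective q := by
    rw [injective_iff_map_eq_one]
    intro g hg
    have := (QuotientGroup.eq_one_iff _).1 hg
    simpa [Subgroup.mem_subgroupOf] using this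
  rcases hq with hq | ⟨f, hf⟩
  · exact .inl fun a b => hinj (by rw [map_mul, map_mul, hq])
  · exact .inr ⟨f.comp q, hf.comp hinj⟩

lemma isKSolvable_of_injective {k : ℕ} {G : Type*} [Group G] (f : G →* Equiv.Perm (Fin k))
    (hf : Function.Injective f) : IsKSolvable k G := by
  have hN : ((⊥ : Subgroup G).subgroupOf ⊤).Normal := inferInstance
  let e : (⊤ : Subgroup G) ⧸ (⊥ : Subgroup G).subgroupOf ⊤ ≃* G :=
    ((QuotientGroup.quotientMulEquivOfEq (Subgroup.bot_subgroupOf _)).trans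
      QuotientGroup.quotientBot).trans Subgroup.topEquiv
  have key : ∃ f : (⊤ : Subgroup G) ⧸ (⊥ : Subgroup G).subgroupOf ⊤ →* Equiv.Perm (Fin k),
      Function.Injective f := ⟨f.comp e.toMonoidHom, hf.comp e.injective⟩
  refine ⟨1, ![⊥, ⊤], rfl, rfl, fun i => ?_⟩
  obtain rfl : i = 0 := Subsingleton.elim _ _
  exact ⟨bot_le, hN, .inr key⟩

/-- The group `GL₄(𝔽₂)` (which equals `PGL₄(𝔽₂) = PSL₄(𝔽₂)`) is `[k]`-solvable if and
only if `k ≥ 8`. -/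
theorem gl42_isKSolvable_iff (k : ℕ) (hk : 1 ≤ k) :
    IsKSolvable k (Matrix.GeneralLinearGroup (Fin 4) (ZMod 2)) ↔ 8 ≤ k := by
  constructor
  · intro h
    by_contra! hlt
    rcases h.of_isSimpleGroup with hcomm | ⟨f, hf⟩
    · exact GL42.not_commutative hcomm
    · have hcard := Nat.card_le_card_of_injective f hf
      rw [GL42.natCard_GL, Nat.card_perm, Nat.card_eq_fintype_card, Fintype.card_fin] at hcard
      have hfac : k.factorial ≤ Nat.factorial 7 := Nat.factorial_le (by omega)
      exact absurd (hcard.trans hfac) (by decide +kernel)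
  · intro h
    exact isKSolvable_of_injective
      ((Equiv.Perm.viaEmbeddingHom (Fin.castLEEmb h)).comp GL42.toPerm)
      ((Equiv.Perm.viaEmbeddingHom_injective _).comp GL42.toPerm_injective)
end

section
/- The quotient of $SL_2(\mathbb{F}_5)$ by its center is isomorphic as a group to the alternating group $A_5$ on five elements. -/
/-!
The matrices of trace `0` and determinant `1` over `𝔽₅` are the 30 vectors of norm `1` in a
three-dimensional quadratic space (norm `det`, inner product proportional to `tr (X * Y)`), and they
fall into five orthogonal frames `{±e₁, ±e₂, ±e₃}`. Each frame contains exactly one pair `±R i` of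
upper triangular matrices, where `R i = !![2, i; 0, -2]`, so the frames are indexed by `i : ZMod 5`;
`label X` is the index of the frame of `X`.

Conjugation by `SL₂(𝔽₅)` preserves the trace form and hence permutes the five frames (`frameAction`).
An element fixing all frames is `±1` (`eq_one_or_neg_one_of_fixes`), so the kernel of the action is
the center. As `|SL₂(𝔽₅)| = 120` and the center has order `2`, the image in `S₅` has order `60`, that
is, index `2`, and `A₅` is the only subgroup of index `2`.
-/

namespace PSL25

open Matrix

/-- The group `SL₂(𝔽₅)`. -/
abbrev G := Matrix.SpecialLinearGroup (Fin 2) (ZMod 5)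

/-- The ring of `2 × 2` matrices over `𝔽₅`. -/
abbrev M := Matrix (Fin 2) (Fin 2) (ZMod 5)

/-- The matrices of trace `0` and determinant `1`. -/
def IsUnitVec (X : M) : Prop := X.trace = 0 ∧ X.det = 1

/-- Two unit vectors belong to the same frame: they are equal, opposite or orthogonal. -/
def SameFrame (X Y : M) : Prop :=
  X = Y ∨ X = -Y ∨ (X * Y).trace = 0

/-- The upper triangular representative of the `i`-th frame. -/
def R (i : ZMod 5) : M := !![2, i; 0, -2]

/-- The index `i` of the frame containing the unit vector `!![a, b; c, -a]`. If `c ≠ 0`, the equation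
`tr (X * R i) = i * c - a = 0` gives `i = a / c = a * c ^ 3`; if `c = 0`, then `a = ±2` and `X = ±R i`
gives `i = 2 * b / a = 3 * a * b`. -/
def label (X : M) : ZMod 5 :=
  if X 1 0 = 0 then 3 * X 0 0 * X 0 1 else X 0 0 * X 1 0 ^ 3

lemma isUnitVec_R (i : ZMod 5) : IsUnitVec (R i) := by
  constructor
  · simp [R, Matrix.trace_fin_two]
  · simp only [R, Matrix.det_fin_two_of, mul_zero, sub_zero]
    decide

lemma label_R (i : ZMod 5) : label (R i) = i := by
  have h : ∀ i : ZMod 5, 3 * 2 * i = i := by decide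
  simpa [label, R] using h i

/-- Every unit vector has the form `!![a, b; c, -a]` with `-a² - bc = 1`. -/
lemma IsUnitVec.exists_eq {X : M} (hX : IsUnitVec X) :
    ∃ a b c, -a * a - b * c = 1 ∧ X = !![a, b; c, -a] := by
  obtain ⟨ht, hd⟩ := hX
  rw [Matrix.trace_fin_two] at ht
  rw [Matrix.det_fin_two] at hd
  have h11 : X 1 1 = -X 0 0 := by linear_combination ht
  refine ⟨X 0 0, X 0 1, X 1 0, ?_, ?_⟩
  · rw [h11] at hd
    linear_combination hd
  · rw [← h11]
    exact Matrix.eta_fin_two X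

lemma sameFrame_R_label {X : M} (hX : IsUnitVec X) :
    SameFrame X (R (label X)) := by
  obtain ⟨a, b, c, h, rfl⟩ := hX.exists_eq
  have key : ∀ a b c : ZMod 5, -a * a - b * c = 1 →
      !![a, b; c, -a] = R (label !![a, b; c, -a]) ∨ !![a, b; c, -a] = -R (label !![a, b; c, -a]) ∨
        (!![a, b; c, -a] * R (label !![a, b; c, -a])).trace = 0 := by
    decide +kernel
  exact key a b c h

lemma label_eq_of_sameFrame {X Y : M} (hX : IsUnitVec X)
    (hY : IsUnitVec Y) (h : SameFrame X Y) : label X = label Y := by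
  obtain ⟨a, b, c, hx, rfl⟩ := hX.exists_eq
  obtain ⟨a', b', c', hy, rfl⟩ := hY.exists_eq
  have hneg : ∀ a b c : ZMod 5, label (-!![a, b; c, -a]) = label !![a, b; c, -a] := by
    decide +kernel
  have horth : ∀ a b c : ZMod 5, -a * a - b * c = 1 → ∀ a' b' c' : ZMod 5,
      -a' * a' - b' * c' = 1 → (!![a, b; c, -a] * !![a', b'; c', -a']).trace = 0 →
      label !![a, b; c, -a] = label !![a', b'; c', -a'] := by
    decide +kernel
  rcases h with h | h | h
  · rw [h]
  · rw [h, hneg]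
  · exact horth a b c hx a' b' c' hy h

/-- Conjugation of a matrix by an element of `SL₂(𝔽₅)`. -/
def conj (A : G) (X : M) : M :=
  (A : M) * X * ((A⁻¹ : G) : M)

lemma inv_mul_val (A : G) : ((A⁻¹ : G) : M) * (A : M) = 1 := by
  rw [← Matrix.SpecialLinearGroup.coe_mul, inv_mul_cancel, Matrix.SpecialLinearGroup.coe_one]

lemma conj_mul (A B : G) (X : M) :
    conj (A * B) X = conj A (conj B X) := by
  simp only [conj, _root_.mul_inv_rev, Matrix.SpecialLinearGroup.coe_mul, Matrix.mul_assoc]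

lemma conj_mul_conj (A : G) (X Y : M) :
    conj A X * conj A Y = conj A (X * Y) := by
  simp only [conj, Matrix.mul_assoc]
  rw [← Matrix.mul_assoc ((A⁻¹ : G) : M) (A : M), inv_mul_val, Matrix.one_mul]

lemma trace_conj (A : G) (X : M) : (conj A X).trace = X.trace := by
  rw [conj, Matrix.trace_mul_comm, ← Matrix.mul_assoc, inv_mul_val, Matrix.one_mul]

lemma IsUnitVec.conj {X : M} (hX : IsUnitVec X) (A : G) :
    IsUnitVec (conj A X) := by
  refine ⟨(trace_conj A X).trans hX.1, ?_⟩
  rw [PSL25.conj, Matrix.det_mul, Matrix.det_mul, A.2, (A⁻¹).2, hX.2, one_mul, one_mul]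

lemma SameFrame.conj {X Y : M} (h : SameFrame X Y) (A : G) :
    SameFrame (conj A X) (conj A Y) := by
  rcases h with rfl | rfl | h
  · exact Or.inl rfl
  · exact Or.inr (Or.inl (by simp [PSL25.conj]))
  · exact Or.inr (Or.inr (by rw [conj_mul_conj, trace_conj, h]))

/-- The action of `SL₂(𝔽₅)` on the indices of the five frames. -/
@[reducible]
def frameAction : MulAction G (ZMod 5) where
  smul A i := label (conj A (R i))
  one_smul i := by
    change label (conj 1 (R i)) = i
    simp [conj, label_R]
  mul_smul A B i := by
    change label (conj (A * B) (R i)) = label (conj A (R (label (conj B (R i)))))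
    rw [conj_mul]
    have hB := (isUnitVec_R i).conj B
    exact label_eq_of_sameFrame (hB.conj A) ((isUnitVec_R _).conj A)
      ((sameFrame_R_label hB).conj A)

/-- The permutation representation of `SL₂(𝔽₅)` on the five frames, where `ZMod 5` unfolds to
`Fin 5`. -/
def permHom : G →* Equiv.Perm (Fin 5) :=
  letI := frameAction
  MulAction.toPermHom G (ZMod 5)

lemma permHom_apply (A : G) (i : Fin 5) : permHom A i = label (conj A (R i)) := rfl

lemma eq_one_or_neg_one_of_fixes (A : G) (h : ∀ i, label (conj A (R i)) = i) :
    A = 1 ∨ A = -1 := by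
  have key : ∀ p q r s : ZMod 5, p * s - q * r = 1 →
      (∀ i, label (!![p, q; r, s] * R i * !![s, -q; -r, p]) = i) →
      !![p, q; r, s] = 1 ∨ !![p, q; r, s] = -1 := by
    decide +kernel
  have hA : (A : M) = !![(A : M) 0 0, (A : M) 0 1; (A : M) 1 0, (A : M) 1 1] := Matrix.eta_fin_two (A : M)
  have hd : (A : M) 0 0 * (A : M) 1 1 - (A : M) 0 1 * (A : M) 1 0 = 1 := by
    rw [← Matrix.det_fin_two]
    exact A.det_coe
  have := key _ _ _ _ hd (fun i => by
    have hi := h i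
    rwa [conj, Matrix.SpecialLinearGroup.coe_inv, Matrix.adjugate_fin_two, hA] at hi)
  rw [← hA] at this
  exact this.imp (fun h => Subtype.ext h) (fun h => Subtype.ext h)

lemma mem_center_iff_eq (A : G) : A ∈ Subgroup.center G ↔ A = 1 ∨ A = -1 := by
  rw [Matrix.SpecialLinearGroup.mem_center_iff]
  constructor
  · rintro ⟨r, hr, h⟩
    have key : ∀ r : ZMod 5, r ^ 2 = 1 → r = 1 ∨ r = -1 := by decide
    rcases key r hr with rfl | rfl
    · exact Or.inl (Subtype.ext (by simp [← h]))
    · exact Or.inr (Subtype.ext (h.symm.trans (by rw [map_neg, map_one]; rfl)))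
  · rintro (rfl | rfl)
    · exact ⟨1, by simp, by simp⟩
    · exact ⟨-1, by simp, by rw [map_neg, map_one]; rfl⟩

lemma ker_permHom : permHom.ker = Subgroup.center G := by
  ext A
  rw [mem_center_iff_eq, MonoidHom.mem_ker]
  constructor
  · intro h
    refine eq_one_or_neg_one_of_fixes A fun i => ?_
    exact (permHom_apply A i).symm.trans (by rw [h]; rfl)
  · rintro (rfl | rfl)
    · exact map_one _
    · ext1 i
      have hinv : (-1 : G)⁻¹ = -1 := by simp
      have hc : conj (-1) (R i) = R i := by
        rw [conj, hinv]
        simp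
      exact (congrArg label hc).trans (label_R i)

lemma card_center : Nat.card (Subgroup.center G) = 2 := by
  have h : ((Subgroup.center G : Subgroup G) : Set G) = {1, -1} := by
    ext A
    exact mem_center_iff_eq A
  have hne : (1 : G) ≠ -1 := by decide
  rw [← SetLike.coe_sort_coe, h, Nat.card_coe_set_eq, Set.ncard_pair hne]

lemma card_G : Nat.card G = 120 := by
  let e : G ≃ {x : ZMod 5 × ZMod 5 × ZMod 5 × ZMod 5 // x.1 * x.2.2.2 - x.2.1 * x.2.2.1 = 1} :=
    { toFun A := ⟨(A.1 0 0, A.1 0 1, A.1 1 0, A.1 1 1), by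
        rw [← Matrix.det_fin_two]
        exact A.2⟩
      invFun x := ⟨!![x.1.1, x.1.2.1; x.1.2.2.1, x.1.2.2.2], by
        rw [Matrix.det_fin_two_of]
        exact x.2⟩
      left_inv A := Subtype.ext (Matrix.eta_fin_two A.1).symm
      right_inv x := rfl }
  rw [Nat.card_congr e, Nat.card_eq_fintype_card]
  decide +kernel

lemma range_permHom : permHom.range = alternatingGroup (Fin 5) := by
  apply Equiv.Perm.eq_alternatingGroup_of_index_eq_two
  have h1 := Subgroup.card_mul_index permHom.ker
  rw [Subgroup.index_ker, ker_permHom, card_center, card_G] at h1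
  have h2 := Subgroup.card_mul_index permHom.range
  rw [Nat.card_eq_fintype_card (α := Equiv.Perm (Fin 5)), Fintype.card_perm, Fintype.card_fin] at h2
  have h3 : Nat.card permHom.range = 60 := by omega
  rw [h3, show Nat.factorial 5 = 120 from rfl] at h2
  omega

end PSL25

/-- `PSL₂(𝔽₅)`, the quotient of `SL₂(𝔽₅)` by its center, is isomorphic to the
alternating group `A₅`. -/
theorem psl25_iso_A5 :
    Nonempty
      ((Matrix.SpecialLinearGroup (Fin 2) (ZMod 5) ⧸
          Subgroup.center (Matrix.SpecialLinearGroup (Fin 2) (ZMod 5))) ≃*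
        alternatingGroup (Fin 5)) :=
  ⟨(QuotientGroup.quotientMulEquivOfEq PSL25.ker_permHom.symm).trans
    ((QuotientGroup.quotientKerEquivRange PSL25.permHom).trans
      (MulEquiv.subgroupCongr PSL25.range_permHom))⟩
end

section
/- The quotient of $SL_2(\mathbb{F}_7)$ by its center is isomorphic as a group to $SL_3(\mathbb{F}_2)$ (which equals $PSL_3(\mathbb{F}_2) = GL_3(\mathbb{F}_2)$). -/
/-!
The projective line `ℙ¹(𝔽₇)` has eight points, as does the vector space `𝔽₂³`, and there is a
bijection `φ : ℙ¹(𝔽₇) → 𝔽₂³` with `φ(∞) = 0` (the function `fanoCoord`) under which `SL₂(𝔽₇)` acts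
by *affine* transformations. It comes from the extended quadratic residue code of length eight:
the sets `{0, 1, 2, 4} + j` of residues modulo `7` are the lines of a Fano plane, and the `j`-th
coordinate of `φ` is the indicator function of `{0, 1, 2, 4} + j`, for `j = 0, 1, 2`.

Taking linear parts gives a map `linPart` to `3 × 3` matrices over `𝔽₂`. That the action is affine
(`fanoCoord_affine`) need only be checked on the elementary matrices of `SL₂(𝔽₇)`, which generate
(`sl_two_induction`); multiplicativity of `linPart` follows. The homomorphism is surjective because
the transvections generate `SL₃(𝔽₂)` and each has an explicit preimage, and its kernel consists of
the scalar matrices, which are the center.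
-/

namespace PSL27

open Matrix

/-- The bijection `φ : ℙ¹(𝔽₇) → 𝔽₂³` in homogeneous coordinates: for `(x, y) ≠ (0, 0)`, the
coordinate `j` is the indicator of `x / y ∈ {0, 1, 2, 4} + j`, and it vanishes at `∞ = (1 : 0)`.
The equation `t ^ 4 = t` cuts out `{0, 1, 2, 4}`, that is, zero and the nonzero squares. -/
def fanoCoord (x y : ZMod 7) (j : Fin 3) : ZMod 2 :=
  let t : ZMod 7 := x - (j : ℕ) * y
  if y ≠ 0 ∧ t ^ 4 = t * y ^ 3 then 1 else 0

/-- `fanoCoord` at the image of the row vector `(x, y)` under the right action of `g`. -/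
def fanoAct (g : Matrix (Fin 2) (Fin 2) (ZMod 7)) (x y : ZMod 7) (j : Fin 3) : ZMod 2 :=
  fanoCoord (x * g 0 0 + y * g 1 0) (x * g 0 1 + y * g 1 1) j

/-- The points of the affine line over `𝔽₇` that `fanoCoord` sends to the standard basis. -/
def basePoint : Fin 3 → ZMod 7 := ![0, 5, 6]

/-- The linear part of the affine transformation of `𝔽₂³` induced by `g`: row `i` is the image of
the `i`-th basis vector minus the image of `0` (subtraction is addition in characteristic `2`). -/
def linPart (g : Matrix (Fin 2) (Fin 2) (ZMod 7)) : Matrix (Fin 3) (Fin 3) (ZMod 2) :=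
  Matrix.of fun i j => fanoAct g (basePoint i) 1 j + fanoAct g 1 0 j

lemma fanoAct_mul (g h : Matrix (Fin 2) (Fin 2) (ZMod 7)) (x y : ZMod 7) (j : Fin 3) :
    fanoAct (g * h) x y j =
      fanoAct h (x * g 0 0 + y * g 1 0) (x * g 0 1 + y * g 1 1) j := by
  simp only [fanoAct, Matrix.mul_apply, Fin.sum_univ_two]
  congr 1 <;> ring

/-- Elementary matrices act affinely on `𝔽₂³`. -/
lemma fanoCoord_affine : ∀ s x y : ZMod 7, ¬ (x = 0 ∧ y = 0) → ∀ j : Fin 3,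
    (fanoAct !![1, s; 0, 1] x y j =
      (fanoCoord x y 0 * linPart !![1, s; 0, 1] 0 j +
        fanoCoord x y 1 * linPart !![1, s; 0, 1] 1 j +
        fanoCoord x y 2 * linPart !![1, s; 0, 1] 2 j) + fanoAct !![1, s; 0, 1] 1 0 j) ∧
    (fanoAct !![1, 0; s, 1] x y j =
      (fanoCoord x y 0 * linPart !![1, 0; s, 1] 0 j +
        fanoCoord x y 1 * linPart !![1, 0; s, 1] 1 j +
        fanoCoord x y 2 * linPart !![1, 0; s, 1] 2 j) + fanoAct !![1, 0; s, 1] 1 0 j) := by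
  decide +kernel

/-- If `h` acts affinely, then `linPart` is multiplicative for right multiplication by `h`. -/
lemma linPart_mul_of_affine (g h : Matrix (Fin 2) (Fin 2) (ZMod 7)) (hg : g.det = 1)
    (hh : ∀ x y : ZMod 7, ¬ (x = 0 ∧ y = 0) → ∀ j : Fin 3,
      fanoAct h x y j =
        (fanoCoord x y 0 * linPart h 0 j + fanoCoord x y 1 * linPart h 1 j +
          fanoCoord x y 2 * linPart h 2 j) + fanoAct h 1 0 j) :
    linPart (g * h) = linPart g * linPart h := by
  rw [Matrix.det_fin_two] at hg
  have key : ∀ x y : ZMod 7, ¬ (x = 0 ∧ y = 0) → ∀ j : Fin 3,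
      fanoAct (g * h) x y j =
        (fanoAct g x y 0 * linPart h 0 j + fanoAct g x y 1 * linPart h 1 j +
          fanoAct g x y 2 * linPart h 2 j) + fanoAct h 1 0 j := by
    intro x y hxy j
    rw [fanoAct_mul]
    refine hh _ _ (fun ⟨h0, h1⟩ => hxy ⟨?_, ?_⟩) j
    · linear_combination (-x) * hg + g 1 1 * h0 - g 1 0 * h1
    · linear_combination (-y) * hg + g 0 0 * h1 - g 0 1 * h0
  ext i j
  rw [Matrix.mul_apply, Fin.sum_univ_three]
  change fanoAct (g * h) (basePoint i) 1 j + fanoAct (g * h) 1 0 j =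
    (fanoAct g (basePoint i) 1 0 + fanoAct g 1 0 0) * linPart h 0 j +
    (fanoAct g (basePoint i) 1 1 + fanoAct g 1 0 1) * linPart h 1 j +
    (fanoAct g (basePoint i) 1 2 + fanoAct g 1 0 2) * linPart h 2 j
  have h10 : (1 : ZMod 7) ≠ 0 := by decide
  rw [key _ _ (fun h => h10 h.2), key _ _ (fun h => h10 h.1)]
  -- The two translation parts cancel in characteristic `2`.
  linear_combination CharTwo.add_self_eq_zero (fanoAct h 1 0 j)

/-- `SL₂` of a field is generated, as a monoid, by elementary matrices. -/
lemma sl_two_induction {F : Type*} [Field F] (P : Matrix (Fin 2) (Fin 2) F → Prop)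
    (hU : ∀ s, P !![1, s; 0, 1]) (hL : ∀ s, P !![1, 0; s, 1])
    (hmul : ∀ A B : Matrix (Fin 2) (Fin 2) F, A.det = 1 → B.det = 1 → P A → P B → P (A * B))
    (M : Matrix (Fin 2) (Fin 2) F) (hM : M.det = 1) : P M := by
  have main : ∀ a b c d : F, a * d - b * c = 1 → c ≠ 0 → P !![a, b; c, d] := by
    intro a b c d hdet hc
    have e : !![a, b; c, d] =
        !![1, (a - 1) / c; 0, 1] * !![1, 0; c, 1] * !![1, (d - 1) / c; 0, 1] := by
      have hb : b = (a * d - 1) / c := by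
        field_simp
        linear_combination -hdet
      ext i j
      fin_cases i <;> fin_cases j <;> simp [Matrix.mul_apply, Fin.sum_univ_two, hb] <;>
        field_simp <;> ring
    rw [e]
    exact hmul _ _ (by simp) (by simp) (hmul _ _ (by simp) (by simp) (hU _) (hL _)) (hU _)
  rw [Matrix.eta_fin_two M] at hM ⊢
  generalize M 0 0 = a, M 0 1 = b, M 1 0 = c, M 1 1 = d at hM ⊢
  rw [Matrix.det_fin_two_of] at hM
  by_cases hc : c = 0
  · subst hc
    have ha : a ≠ 0 := by
      rintro rfl
      simp at hM
    have e : !![a, b; 0, d] = !![1, 0; -1, 1] * !![a, b; a, b + d] := by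
      ext i j
      fin_cases i <;> fin_cases j <;> simp [Matrix.mul_apply, Fin.sum_univ_two]
    have hd : a * (b + d) - b * a = 1 := by linear_combination hM
    rw [e]
    exact hmul _ _ (by simp) (by rw [Matrix.det_fin_two_of, hd]) (hL _) (main _ _ _ _ hd ha)
  · exact main a b c d hM hc

lemma linPart_mul (g h : Matrix (Fin 2) (Fin 2) (ZMod 7)) (hg : g.det = 1) (hh : h.det = 1) :
    linPart (g * h) = linPart g * linPart h := by
  have : Fact (Nat.Prime 7) := ⟨by norm_num⟩
  refine sl_two_induction
    (fun h => ∀ g, g.det = 1 → linPart (g * h) = linPart g * linPart h) ?_ ?_ ?_ h hh g hg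
  · intro s g hg
    exact linPart_mul_of_affine g _ hg fun x y hxy j => (fanoCoord_affine s x y hxy j).1
  · intro s g hg
    exact linPart_mul_of_affine g _ hg fun x y hxy j => (fanoCoord_affine s x y hxy j).2
  · intro A B hA hB ihA ihB g hg
    rw [← mul_assoc, ihB _ (by rw [det_mul, hg, hA, one_mul]), ihA _ hg, ihB _ hA, mul_assoc]

lemma linPart_one : linPart 1 = 1 := by
  decide +kernel

/-- The determinant is `1` because it is a unit of `𝔽₂`. -/
lemma det_linPart (g : SpecialLinearGroup (Fin 2) (ZMod 7)) : (linPart g.1).det = 1 := by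
  have h : (linPart g.1).det * (linPart (g⁻¹).1).det = 1 := by
    have hone : g.1 * (g⁻¹).1 = 1 := congrArg Subtype.val (mul_inv_cancel g)
    rw [← det_mul, ← linPart_mul _ _ g.2 (g⁻¹).2, hone, linPart_one, det_one]
  revert h
  generalize (linPart g.1).det = u
  generalize (linPart (g⁻¹).1).det = v
  revert u v
  decide

/-- The linear-part homomorphism `SL₂(𝔽₇) → SL₃(𝔽₂)`. -/
def linHom : SpecialLinearGroup (Fin 2) (ZMod 7) →* SpecialLinearGroup (Fin 3) (ZMod 2) where
  toFun g := ⟨linPart g.1, det_linPart g⟩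
  map_one' := Subtype.ext linPart_one
  map_mul' g h := Subtype.ext (linPart_mul g.1 h.1 g.2 h.2)

/-- Every transvection of `𝔽₂³` is the linear part of some element of `SL₂(𝔽₇)`. -/
lemma exists_linPart_eq_transvection (i j : Fin 3) (hij : i ≠ j) :
    ∃ g : SpecialLinearGroup (Fin 2) (ZMod 7), linPart g.1 = Matrix.transvection i j 1 := by
  have key : ∀ M : Matrix (Fin 2) (Fin 2) (ZMod 7),
      M.det = 1 → linPart M = Matrix.transvection i j 1 →
      ∃ g : SpecialLinearGroup (Fin 2) (ZMod 7), linPart g.1 = Matrix.transvection i j 1 :=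
    fun M hM h => ⟨⟨M, hM⟩, h⟩
  fin_cases i <;> fin_cases j
  · exact absurd rfl hij
  · exact key !![3, 4; 1, 4] (by decide +kernel) (by decide +kernel)
  · exact key !![3, 1; 4, 4] (by decide +kernel) (by decide +kernel)
  · exact key !![3, 6; 3, 4] (by decide +kernel) (by decide +kernel)
  · exact absurd rfl hij
  · exact key !![0, 3; 2, 0] (by decide +kernel) (by decide +kernel)
  · exact key !![3, 3; 6, 4] (by decide +kernel) (by decide +kernel)
  · exact key !![0, 2; 3, 0] (by decide +kernel) (by decide +kernel)
  · exact absurd rfl hij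

lemma linHom_surjective : Function.Surjective linHom := by
  have scalar : ∀ c : ZMod 2, c = 0 ∨ c = 1 := by decide
  have : Fact (Nat.Prime 2) := ⟨Nat.prime_two⟩
  rintro ⟨M, hM⟩
  suffices h : ∃ g : SpecialLinearGroup (Fin 2) (ZMod 7), linPart g.1 = M by
    obtain ⟨g, hg⟩ := h
    exact ⟨g, Subtype.ext hg⟩
  refine Matrix.diagonal_transvection_induction
    (fun M => ∃ g : SpecialLinearGroup (Fin 2) (ZMod 7), linPart g.1 = M) M ?_ ?_ ?_
  · -- A diagonal matrix over `𝔽₂` with nonzero determinant is the identity.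
    intro D hD
    rw [hM, det_diagonal] at hD
    have hD1 : D = 1 := by
      funext i
      refine (scalar (D i)).resolve_left fun h0 => ?_
      rw [Finset.prod_eq_zero (Finset.mem_univ i) h0] at hD
      exact zero_ne_one hD
    exact ⟨1, by rw [hD1]; simpa using linPart_one⟩
  · rintro ⟨i, j, hij, c⟩
    rcases scalar c with rfl | rfl
    · exact ⟨1, by simpa [TransvectionStruct.toMatrix] using linPart_one⟩
    · exact exists_linPart_eq_transvection i j hij
  · rintro A B ⟨g, rfl⟩ ⟨h, rfl⟩
    exact ⟨g * h, linPart_mul g.1 h.1 g.2 h.2⟩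

lemma linPart_eq_one_iff : ∀ a b c d : ZMod 7, a * d - b * c = 1 →
    (linPart !![a, b; c, d] = 1 ↔ b = 0 ∧ c = 0 ∧ a = d) := by
  decide +kernel

lemma mem_center_iff_entries (g : SpecialLinearGroup (Fin 2) (ZMod 7)) :
    g ∈ Subgroup.center (SpecialLinearGroup (Fin 2) (ZMod 7)) ↔
      g.1 0 1 = 0 ∧ g.1 1 0 = 0 ∧ g.1 0 0 = g.1 1 1 := by
  rw [Matrix.SpecialLinearGroup.mem_center_iff]
  constructor
  · rintro ⟨r, -, hr⟩
    rw [← hr]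
    simp
  · rintro ⟨h01, h10, h00⟩
    have hdet : g.1.det = 1 := g.2
    rw [det_fin_two, h01, ← h00] at hdet
    refine ⟨g.1 0 0, ?_, ?_⟩
    · simpa [sq] using hdet
    · ext i j
      fin_cases i <;> fin_cases j <;> simp [h01, h10, h00]

lemma ker_linHom : linHom.ker = Subgroup.center (SpecialLinearGroup (Fin 2) (ZMod 7)) := by
  ext g
  have hdet : g.1.det = 1 := g.2
  rw [det_fin_two] at hdet
  rw [mem_center_iff_entries, ← linPart_eq_one_iff _ _ _ _ hdet, ← Matrix.eta_fin_two,
    MonoidHom.mem_ker]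
  exact Subtype.ext_iff

end PSL27

/-- `PSL₂(𝔽₇)`, the quotient of `SL₂(𝔽₇)` by its center, is isomorphic to `SL₃(𝔽₂)`
(which equals `PSL₃(𝔽₂) = GL₃(𝔽₂)`). -/
theorem psl27_iso_sl32 :
    Nonempty
      ((Matrix.SpecialLinearGroup (Fin 2) (ZMod 7) ⧸
          Subgroup.center (Matrix.SpecialLinearGroup (Fin 2) (ZMod 7))) ≃*
        Matrix.SpecialLinearGroup (Fin 3) (ZMod 2)) :=
  ⟨(QuotientGroup.quotientMulEquivOfEq PSL27.ker_linHom.symm).trans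
    (QuotientGroup.quotientKerEquivOfSurjective PSL27.linHom PSL27.linHom_surjective)⟩
end

section
/- The quotient of $SL_2(\mathbb{F}_9)$ by its center is isomorphic as a group to the alternating group $A_6$ on six elements. -/
/-!
The group `SL₂(𝔽₉)` acts on the four-dimensional `𝔽₃`-space of Hermitian `2 × 2` matrices over `𝔽₉`
by `g • h = g h gᴴ`, preserving the quadratic form `det`. In this space there is a regular simplex
with six vertices `v₀, …, v₅` (all differences `vᵢ - vⱼ` have determinant `-1`), and each `g`
permutes the vertices up to a translation: `g (vᵢ - vⱼ) gᴴ = v_{σ i} - v_{σ j}` for a permutation `σ`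
of the vertices (`IsInduced`). Since transvections generate `SL₂`, the existence of `σ` needs checking
only for these (`isInduced_transvection`); `σ` is unique because the thirty differences are distinct
(`IsInduced.unique`). Hence `g ↦ σ` is a homomorphism `SL₂(𝔽₉) → S₆` (`vertexHom`), trivial on the
centre `{±1}`, and it descends to `PSL₂(𝔽₉)`.

As `PSL₂(𝔽₉)` is simple and the homomorphism is nontrivial, it is injective; as `PSL₂(𝔽₉)` is
perfect, its image consists of even permutations. Finally `|PSL₂(𝔽₉)| = 360 = |A₆|`.

The computations take place in the model `𝔽₃[i]` of the field with nine elements, in which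
arithmetic is decidable.
-/

open Matrix
open scoped MatrixGroups

namespace PSL29

/-- The field with nine elements, realised as `𝔽₃[i]` with `i² = -1`. -/
abbrev K : Type := QuadraticAlgebra (ZMod 3) (-1) 0

instance : Fact (∀ r : ZMod 3, r ^ 2 ≠ -1 + 0 * r) := ⟨by decide⟩

instance : Fintype K := Fintype.ofEquiv _ (QuadraticAlgebra.equivProd (-1 : ZMod 3) 0).symm

lemma card_K : Fintype.card K = 9 := by
  rw [Fintype.card_congr (QuadraticAlgebra.equivProd (-1 : ZMod 3) 0)]
  rfl

/-- The six vertices of a regular simplex in the space of Hermitian `2 × 2` matrices over `𝔽₉`. The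
matrices are Hermitian for the conjugation `star` of `𝔽₃[i]`, which is the Frobenius map. -/
def vertex : Fin 6 → Matrix (Fin 2) (Fin 2) K :=
  ![!![0, 0; 0, 0], !![0, ⟨0, 1⟩; ⟨0, -1⟩, 1], !![0, ⟨0, -1⟩; ⟨0, 1⟩, 1],
    !![-1, 1; 1, 0], !![-1, -1; -1, 0], !![-1, 0; 0, 1]]

/-- The permutation `σ` is the one by which `g` permutes the vertices of the simplex, up to a
translation. -/
def IsInduced (g : Matrix (Fin 2) (Fin 2) K) (σ : Equiv.Perm (Fin 6)) : Prop :=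
  ∀ i j, g * (vertex i - vertex j) * gᴴ = vertex (σ i) - vertex (σ j)

instance (g : Matrix (Fin 2) (Fin 2) K) (σ : Equiv.Perm (Fin 6)) : Decidable (IsInduced g σ) :=
  inferInstanceAs (Decidable (∀ _ _, _))

lemma IsInduced.mul {g h : Matrix (Fin 2) (Fin 2) K} {σ τ : Equiv.Perm (Fin 6)}
    (hg : IsInduced g σ) (hh : IsInduced h τ) : IsInduced (g * h) (σ * τ) := by
  intro i j
  rw [Equiv.Perm.mul_apply, Equiv.Perm.mul_apply, ← hg, ← hh, conjTranspose_mul]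
  simp only [Matrix.mul_assoc]

lemma vertex_sub_injective :
    ∀ i j k l, i ≠ j → vertex i - vertex j = vertex k - vertex l → i = k := by
  decide +kernel

lemma IsInduced.unique {g : Matrix (Fin 2) (Fin 2) K} {σ τ : Equiv.Perm (Fin 6)}
    (hσ : IsInduced g σ) (hτ : IsInduced g τ) : σ = τ := by
  ext i
  obtain ⟨j, hj⟩ := exists_ne i
  exact congrArg _ <| vertex_sub_injective _ (σ j) _ (τ j) (σ.injective.ne hj.symm)
    ((hσ i j).symm.trans (hτ i j))

/-- The upper transvections with parameters `1` and `i` induce disjoint three-cycles, whence the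
permutation induced by the one with parameter `a + b i`. -/
lemma isInduced_upper : ∀ a b : ZMod 3, IsInduced (Matrix.transvection 0 1 ⟨a, b⟩)
    (c[(0 : Fin 6), 4, 3] ^ a.val * c[(1 : Fin 6), 2, 5] ^ b.val) := by
  decide +kernel

/-- The lower transvections likewise: parameters `1` and `i` induce disjoint three-cycles. -/
lemma isInduced_lower : ∀ a b : ZMod 3, IsInduced (Matrix.transvection 1 0 ⟨a, b⟩)
    (c[(3 : Fin 6), 5, 4] ^ a.val * c[(0 : Fin 6), 2, 1] ^ b.val) := by
  decide +kernel

lemma isInduced_transvection (i j : Fin 2) (hij : i ≠ j) (c : K) :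
    ∃ σ, IsInduced (Matrix.transvection i j c) σ := by
  fin_cases i <;> fin_cases j
  · exact absurd rfl hij
  · exact ⟨_, isInduced_upper c.re c.im⟩
  · exact ⟨_, isInduced_lower c.re c.im⟩
  · exact absurd rfl hij

/-- Transvections generate `SL₂(𝔽₉)`. The motive is kept abstract so that the ring structure of `K`
and the one underlying its field structure are identified once, without unfolding `IsInduced`. -/
lemma transvection_induction (P : Matrix (Fin 2) (Fin 2) K → Prop)
    (htransvec : ∀ (i j : Fin 2), i ≠ j → ∀ c, P (Matrix.transvection i j c))
    (hmul : ∀ A B, P A → P B → P (A * B)) (g : SL(2, K)) : P g :=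
  SL2.transvection_induction (fun g : SL(2, K) ↦ P g) (fun i j hij c ↦ htransvec i j hij c)
    (fun A B hA hB ↦ hmul A B hA hB) g

lemma exists_isInduced (g : SL(2, K)) : ∃ σ, IsInduced g σ := by
  refine transvection_induction (fun g ↦ ∃ σ, IsInduced g σ) isInduced_transvection ?_ g
  rintro A B ⟨σ, hσ⟩ ⟨τ, hτ⟩
  exact ⟨σ * τ, hσ.mul hτ⟩

/-- The action of `SL₂(𝔽₉)` on the six vertices of the simplex. -/
noncomputable def vertexHom : SL(2, K) →* Equiv.Perm (Fin 6) :=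
  MonoidHom.mk' (fun g ↦ (exists_isInduced g).choose) fun g h ↦
    (exists_isInduced (g * h)).choose_spec.unique <| by
      simpa using (exists_isInduced g).choose_spec.mul (exists_isInduced h).choose_spec

lemma vertexHom_eq {g : SL(2, K)} {σ : Equiv.Perm (Fin 6)} (h : IsInduced g σ) :
    vertexHom g = σ :=
  (exists_isInduced g).choose_spec.unique h

lemma center_le_ker : Subgroup.center SL(2, K) ≤ vertexHom.ker := by
  intro g hg
  obtain ⟨r, hr, hrg⟩ := Matrix.SpecialLinearGroup.mem_center_iff.1 hg
  refine vertexHom_eq fun i j ↦ ?_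
  rw [← hrg]
  obtain rfl | rfl := (by simpa using hr : r = 1 ∨ r = -1) <;> simp only [map_neg, map_one] <;> simp

/-- The action of `PSL₂(𝔽₉)` on the six vertices of the simplex. -/
noncomputable def pslHom : PSL(2, K) →* Equiv.Perm (Fin 6) :=
  QuotientGroup.lift _ vertexHom center_le_ker

lemma four_le_card : 4 ≤ Nat.card K := by
  rw [Nat.card_eq_fintype_card, card_K]; norm_num

lemma pslHom_injective : Function.Injective pslHom := by
  have := Matrix.ProjectiveSpecialLinearGroup.rank_two_simple four_le_card
  rw [← MonoidHom.ker_eq_bot_iff]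
  refine (inferInstance : pslHom.ker.Normal).eq_bot_or_eq_top.resolve_right fun h ↦ ?_
  have h1 : vertexHom (SpecialLinearGroup.transvection (zero_ne_one (α := Fin 2)) 1) = 1 :=
    (h ▸ Subgroup.mem_top
      (QuotientGroup.mk (SpecialLinearGroup.transvection (zero_ne_one (α := Fin 2)) 1) : PSL(2, K)) :
      _ ∈ pslHom.ker)
  have h2 : IsInduced (SpecialLinearGroup.transvection (zero_ne_one (α := Fin 2)) 1 : SL(2, K))
      (c[(0 : Fin 6), 4, 3] ^ 1 * c[(1 : Fin 6), 2, 5] ^ 0) := isInduced_upper 1 0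
  exact absurd ((vertexHom_eq h2).symm.trans h1) (by decide)

lemma sign_pslHom (x : PSL(2, K)) : pslHom x ∈ alternatingGroup (Fin 6) := by
  -- The element `1 + i` has square `2 i ≠ 1`.
  have hperf := SL2Simple.PSL_commutator_eq_top (F := K) ⟨⟨1, 1⟩, by decide, by decide⟩
  have := Abelianization.commutator_subset_ker (Equiv.Perm.sign.comp pslHom)
  rw [hperf] at this
  exact this (Subgroup.mem_top x)

lemma card_SL : Nat.card SL(2, K) = 720 := by
  have hGL : Nat.card (GL (Fin 2) K) = 5760 := by
    rw [Matrix.card_GL_field, card_K]; rfl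
  have hdet := Subgroup.card_eq_card_quotient_mul_card_subgroup
    (GeneralLinearGroup.det (n := Fin 2) (R := K)).ker
  have hunits : Nat.card Kˣ = 8 := by
    rw [Nat.card_units, Nat.card_eq_fintype_card, card_K]
  have hSL : Nat.card (GeneralLinearGroup.det (n := Fin 2) (R := K)).ker = Nat.card SL(2, K) := by
    refine (Nat.card_congr (Equiv.ofBijective
      (fun g ↦ ⟨SpecialLinearGroup.toGL g, Units.ext g.2⟩) ⟨fun g h hgh ↦ ?_, fun x ↦ ?_⟩)).symm
    · exact SpecialLinearGroup.toGL_injective (congrArg Subtype.val hgh)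
    · exact ⟨⟨x.1, congrArg Units.val x.2⟩, Subtype.ext (Units.ext rfl)⟩
  rw [hGL, hSL, Nat.card_congr (QuotientGroup.quotientKerEquivOfSurjective _
    GeneralLinearGroup.det_surjective).toEquiv, hunits] at hdet
  omega

lemma card_PSL : Nat.card PSL(2, K) = 360 := by
  have h := Subgroup.card_eq_card_quotient_mul_card_subgroup (Subgroup.center SL(2, K))
  have hc : Nat.card (Subgroup.center SL(2, K)) = 2 := by
    rw [Nat.card_congr (SpecialLinearGroup.center_equiv_rootsOfUnity' (0 : Fin 2)).toEquiv]
    have : IsPrimitiveRoot (-1 : K) 2 := IsPrimitiveRoot.mk_of_lt _ two_pos (by simp) fun l h0 h2 ↦ by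
      obtain rfl : l = 1 := by omega
      decide
    exact this.card_rootsOfUnity
  rw [card_SL, hc] at h
  change 720 = Nat.card PSL(2, K) * 2 at h
  omega

/-- The isomorphism for the model `𝔽₃[i]` of the field with nine elements. -/
noncomputable def pslEquiv : PSL(2, K) ≃* alternatingGroup (Fin 6) :=
  MulEquiv.ofBijective (pslHom.codRestrict _ sign_pslHom) <| by
    have : Finite PSL(2, K) := Nat.finite_of_card_ne_zero (by rw [card_PSL]; decide)
    refine (Nat.bijective_iff_injective_and_card _).2 ⟨fun x y h ↦ ?_, ?_⟩
    · exact pslHom_injective (congrArg Subtype.val h)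
    · rw [card_PSL, nat_card_alternatingGroup, Nat.card_fin]; rfl

/-- The functoriality of `PSL₂` for isomorphisms of fields. -/
noncomputable def pslCongr {F F' : Type*} [Field F] [Field F'] (e : F ≃+* F') :
    PSL(2, F) ≃* PSL(2, F') :=
  let f : SL(2, F) ≃* SL(2, F') :=
    MonoidHom.toMulEquiv (SpecialLinearGroup.map e.toRingHom)
      (SpecialLinearGroup.map e.symm.toRingHom) (by ext; simp) (by ext; simp)
  QuotientGroup.congr _ _ f <| by
    ext x
    erw [Subgroup.mem_map_equiv]
    rw [Subgroup.mem_center_iff, Subgroup.mem_center_iff,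
      f.symm.surjective.forall]
    simp only [← map_mul, f.symm.injective.eq_iff]

end PSL29

/-- `PSL₂(𝔽₉)`, the quotient of `SL₂(𝔽₉)` by its center, is isomorphic to the
alternating group `A₆`. Here `𝔽₉ = GF(3²)` is the field with nine elements. -/
theorem psl29_iso_A6 :
    Nonempty
      ((Matrix.SpecialLinearGroup (Fin 2) (GaloisField 3 2) ⧸
          Subgroup.center (Matrix.SpecialLinearGroup (Fin 2) (GaloisField 3 2))) ≃*
        alternatingGroup (Fin 6)) := by
  have hcard : Nat.card (GaloisField 3 2) = 9 := GaloisField.card 3 2 two_ne_zero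
  have : Fintype (GaloisField 3 2) := Fintype.ofFinite _
  rw [Nat.card_eq_fintype_card, ← PSL29.card_K] at hcard
  exact ⟨(PSL29.pslCongr (FiniteField.ringEquivOfCardEq hcard)).trans PSL29.pslEquiv⟩
end
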